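/- Fix a positive integer n. There exists a constant c_n, depending only on n, such that every finite subgroup G of PGL_n(ℂ) contains a characteristic subgroup of index at most c_n which is diagonalizable. -/

import Mathlib

open Matrix

/-- The projective general linear group `PGL n K`, the quotient of `GL n K` by its
center (the nonzero scalar matrices). -/
abbrev PGL (n : ℕ) (K : Type*) [Field K] :=
  GL (Fin n) K ⧸ Subgroup.center (GL (Fin n) K)

/-- A subgroup `H` of `PGL n ℂ` is diagonalizable if its inverse image in
`GL n ℂ` is simultaneously diagonalizable: some `P ∈ GL n ℂ` conjugates every
element of the inverse image to a diagonal matrix. -/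
def IsDiagonalizableSubgroup {n : ℕ} (H : Subgroup (PGL n ℂ)) : Prop :=
  ∃ P : GL (Fin n) ℂ, ∀ g : GL (Fin n) ℂ,
    QuotientGroup.mk' (Subgroup.center (GL (Fin n) ℂ)) g ∈ H →
      Matrix.IsDiag ((P⁻¹ * g * P : GL (Fin n) ℂ) : Matrix (Fin n) (Fin n) ℂ)

/-!
A finite subgroup `G` of `PGL_n(ℂ)` is the image of a finite group `L` of matrices, its preimage in
`SL_n(ℂ)`. By Weyl's unitary trick `L` may be taken unitary. Commutators contract near `1`, so the
elements of `L` at distance less than `1/2` from `1` commute with each other; the abelian subgroup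
`A` that they generate has index at most some `J` depending only on `n`, because representatives of
its cosets are `1/2`-separated points of the unit ball of the matrix algebra.

`A` need not be characteristic, so it is replaced by `C = L ^ m` with `m = J!`. Every `m`-th power
lies in `A`, so `C ≤ A` is diagonalizable; and `C` contains the `m`-th powers of elements of `A`,
which have index in `A` equal to the number of `m`-torsion elements of `A`, at most `m ^ n` since
`A` is diagonalizable. Being verbal, `C` maps onto the characteristic subgroup `G ^ m` of `G`.
-/

section PowSubgroup

variable {G : Type*} [Group G]

/-- The verbal subgroup `G ^ m` generated by the `m`-th powers of the elements of `G`. It serves as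
a characteristic substitute for an abelian subgroup of bounded index. -/
def powSubgroup (G : Type*) [Group G] (m : ℕ) : Subgroup G :=
  Subgroup.closure (Set.range fun g : G => g ^ m)

lemma pow_mem_powSubgroup (g : G) (m : ℕ) : g ^ m ∈ powSubgroup G m :=
  Subgroup.subset_closure ⟨g, rfl⟩

lemma map_powSubgroup_of_surjective {H : Type*} [Group H] {φ : G →* H}
    (hφ : Function.Surjective φ) (m : ℕ) : (powSubgroup G m).map φ = powSubgroup H m := by
  rw [powSubgroup, MonoidHom.map_closure, ← Set.range_comp, powSubgroup, ← hφ.range_comp]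
  simp only [Function.comp_def, map_pow]

instance powSubgroup_characteristic (m : ℕ) : (powSubgroup G m).Characteristic :=
  Subgroup.characteristic_iff_map_eq.2 fun φ => map_powSubgroup_of_surjective φ.surjective m

lemma powSubgroup_factorial_le {A : Subgroup G} (hA : A.index ≠ 0) {k : ℕ} (hk : A.index ≤ k) :
    powSubgroup G k.factorial ≤ A := by
  rw [powSubgroup, Subgroup.closure_le]
  rintro _ ⟨g, rfl⟩
  obtain ⟨j, hj_pos, hj_le, hj_mem⟩ := Subgroup.exists_pow_mem_of_index_ne_zero hA g
  obtain ⟨l, hl⟩ := Nat.dvd_factorial hj_pos (hj_le.trans hk)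
  simpa only [hl, pow_mul, SetLike.mem_coe] using A.pow_mem hj_mem l

-- In the abelian group `A`, the index of the `m`-th powers equals the number of `m`-torsion points.
open scoped IsMulCommutative in
lemma index_powSubgroup_le [Finite G] (A : Subgroup G) [IsMulCommutative A] (m : ℕ) :
    (powSubgroup G m).index ≤ Nat.card {a : A // a ^ m = 1} * A.index := by
  have hle : (powMonoidHom m : A →* A).range.map A.subtype ≤ powSubgroup G m := by
    rintro _ ⟨_, ⟨a, rfl⟩, rfl⟩
    exact pow_mem_powSubgroup (a : G) m
  calc (powSubgroup G m).index
      ≤ ((powMonoidHom m : A →* A).range.map A.subtype).index := Subgroup.index_antitone hle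
    _ = (powMonoidHom m : A →* A).range.index * A.index := Subgroup.index_map_subtype _
    _ = Nat.card (powMonoidHom m : A →* A).ker * A.index := by rw [Subgroup.index_range]
    _ = Nat.card {a : A // a ^ m = 1} * A.index := rfl

end PowSubgroup

section Jordan

open scoped commutatorElement

-- The average of the powers of `x` is invertible, being at distance less than `1` from `1`, and is
-- annihilated by `x - 1`.
lemma eq_one_of_forall_norm_pow_sub_one_lt_one {R : Type*} [NormedRing R] [NormedAlgebra ℝ R]
    [CompleteSpace R] {x : R} (hx : IsOfFinOrder x) (hpow : ∀ k : ℕ, ‖x ^ k - 1‖ < 1) : x = 1 := by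
  obtain ⟨N, hN, hxN⟩ := hx.exists_pow_eq_one
  set T : R := (N : ℝ)⁻¹ • ∑ k ∈ Finset.range N, x ^ k
  have hT_fixed : (x - 1) * T = 0 := by
    rw [mul_smul_comm, mul_geom_sum, hxN, sub_self, smul_zero]
  have hN' : (0 : ℝ) < N := by exact_mod_cast hN
  have hT_near : ‖1 - T‖ < 1 := by
    have hdiff : 1 - T = (N : ℝ)⁻¹ • ∑ k ∈ Finset.range N, (1 - x ^ k) := by
      rw [Finset.sum_sub_distrib, smul_sub, Finset.sum_const, Finset.card_range,
        ← Nat.cast_smul_eq_nsmul ℝ, inv_smul_smul₀ hN'.ne']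
    have hsum : ‖∑ k ∈ Finset.range N, (1 - x ^ k)‖ < N := calc
      _ ≤ ∑ k ∈ Finset.range N, ‖1 - x ^ k‖ := norm_sum_le _ _
      _ < ∑ _k ∈ Finset.range N, (1 : ℝ) :=
        Finset.sum_lt_sum_of_nonempty (Finset.nonempty_range_iff.2 hN.ne')
          fun k _ => norm_sub_rev (x ^ k) 1 ▸ hpow k
      _ = N := by simp
    rw [hdiff, norm_smul, norm_inv, Real.norm_natCast]
    exact (inv_mul_lt_one₀ hN').2 hsum
  have hT_unit : IsUnit T := by simpa using isUnit_one_sub_of_norm_lt_one hT_near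
  exact sub_eq_zero.1 (hT_unit.mul_left_eq_zero.1 hT_fixed)

lemma commutatorElement_pow_left {G : Type*} [Group G] {g h : G} (hg : Commute g ⁅g, h⁆) (k : ℕ) :
    ⁅g ^ k, h⁆ = ⁅g, h⁆ ^ k := by
  induction k with
  | zero => simp
  | succ k ih =>
    rw [pow_succ', commutatorElement_mul_left_eq_conj_mul, ih, (hg.pow_right k).eq,
      mul_inv_cancel_right, pow_succ]

section NormedRing

variable {G : Type*} [Group G] {R : Type*} [NormedRing R] {ρ : G →* R}

lemma norm_map_mul_of_norm_map_le_one (hρ : ∀ g, ‖ρ g‖ ≤ 1) (g : G) (x : R) :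
    ‖ρ g * x‖ = ‖x‖ := by
  refine le_antisymm ((norm_mul_le _ _).trans (mul_le_of_le_one_left (norm_nonneg x) (hρ g))) ?_
  calc ‖x‖ = ‖ρ g⁻¹ * (ρ g * x)‖ := by rw [← mul_assoc, ← map_mul]; simp
    _ ≤ ‖ρ g⁻¹‖ * ‖ρ g * x‖ := norm_mul_le _ _
    _ ≤ ‖ρ g * x‖ := mul_le_of_le_one_left (norm_nonneg _) (hρ g⁻¹)

lemma norm_mul_map_of_norm_map_le_one (hρ : ∀ g, ‖ρ g‖ ≤ 1) (x : R) (g : G) :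
    ‖x * ρ g‖ = ‖x‖ := by
  refine le_antisymm ((norm_mul_le _ _).trans (mul_le_of_le_one_right (norm_nonneg x) (hρ g))) ?_
  calc ‖x‖ = ‖x * ρ g * ρ g⁻¹‖ := by rw [mul_assoc, ← map_mul]; simp
    _ ≤ ‖x * ρ g‖ * ‖ρ g⁻¹‖ := norm_mul_le _ _
    _ ≤ ‖x * ρ g‖ := mul_le_of_le_one_right (norm_nonneg _) (hρ g⁻¹)

lemma norm_map_commutatorElement_sub_one (hρ : ∀ g, ‖ρ g‖ ≤ 1) (g h : G) :
    ‖ρ ⁅g, h⁆ - 1‖ = ‖ρ g * ρ h - ρ h * ρ g‖ := by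
  rw [← norm_mul_map_of_norm_map_le_one hρ _ (h * g), sub_mul, ← map_mul, one_mul,
    show ⁅g, h⁆ * (h * g) = g * h by simp [commutatorElement_def, mul_assoc], map_mul, map_mul]

lemma norm_map_commutatorElement_sub_one_le (hρ : ∀ g, ‖ρ g‖ ≤ 1) (g h : G) :
    ‖ρ ⁅g, h⁆ - 1‖ ≤ 2 * ‖ρ h - 1‖ := by
  calc ‖ρ ⁅g, h⁆ - 1‖ = ‖ρ g * (ρ h - 1) - (ρ h - 1) * ρ g‖ := by
        rw [norm_map_commutatorElement_sub_one hρ]; noncomm_ring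
    _ ≤ ‖ρ g * (ρ h - 1)‖ + ‖(ρ h - 1) * ρ g‖ := norm_sub_le _ _
    _ = 2 * ‖ρ h - 1‖ := by
        rw [norm_map_mul_of_norm_map_le_one hρ, norm_mul_map_of_norm_map_le_one hρ, two_mul]

lemma norm_map_commutatorElement_sub_one_le_mul (hρ : ∀ g, ‖ρ g‖ ≤ 1) (g h : G) :
    ‖ρ ⁅g, h⁆ - 1‖ ≤ 2 * ‖ρ g - 1‖ * ‖ρ h - 1‖ := by
  calc ‖ρ ⁅g, h⁆ - 1‖ = ‖(ρ g - 1) * (ρ h - 1) - (ρ h - 1) * (ρ g - 1)‖ := by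
        rw [norm_map_commutatorElement_sub_one hρ]; noncomm_ring
    _ ≤ ‖ρ g - 1‖ * ‖ρ h - 1‖ + ‖ρ h - 1‖ * ‖ρ g - 1‖ :=
        (norm_sub_le _ _).trans (add_le_add (norm_mul_le _ _) (norm_mul_le _ _))
    _ = 2 * ‖ρ g - 1‖ * ‖ρ h - 1‖ := by ring

variable [NormedAlgebra ℝ R]

-- Since `⁅g, h⁆ ^ k = ⁅g ^ k, h⁆`, all powers of `⁅g, h⁆` stay close to `1`.
lemma commute_of_commute_commutatorElement [CompleteSpace R] [Finite G]
    (hρ : ∀ g, ‖ρ g‖ ≤ 1) (hinj : Function.Injective ρ) {g h : G} (hh : ‖ρ h - 1‖ < 1 / 2)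
    (hg : Commute g ⁅g, h⁆) : Commute g h := by
  have hpow (k : ℕ) : ‖ρ ⁅g, h⁆ ^ k - 1‖ < 1 := by
    rw [← map_pow, ← commutatorElement_pow_left hg]
    linarith [norm_map_commutatorElement_sub_one_le hρ (g ^ k) h]
  have hfin : IsOfFinOrder (ρ ⁅g, h⁆) := ρ.isOfFinOrder (isOfFinOrder_of_finite _)
  have hone : ρ ⁅g, h⁆ = 1 := eq_one_of_forall_norm_pow_sub_one_lt_one hfin hpow
  exact commutatorElement_eq_one_iff_commute.1 (hinj (hone.trans ρ.map_one.symm))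

-- For fixed `g`, consider a counterexample `h` closest to `1`: the commutator `⁅g, h⁆` is closer.
lemma commute_of_norm_map_sub_one_lt [CompleteSpace R] [Finite G]
    (hρ : ∀ g, ‖ρ g‖ ≤ 1) (hinj : Function.Injective ρ) {g h : G} (hg : ‖ρ g - 1‖ < 1 / 2)
    (hh : ‖ρ h - 1‖ < 1 / 2) : Commute g h := by
  by_contra hgh
  obtain ⟨h₀, ⟨hh₀, hgh₀⟩, hmin⟩ :=
    Set.exists_min_image {x : G | ‖ρ x - 1‖ < 1 / 2 ∧ ¬ Commute g x} (fun x => ‖ρ x - 1‖)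
      (Set.toFinite _) ⟨h, hh, hgh⟩
  have hpos : 0 < ‖ρ h₀ - 1‖ := by
    rw [norm_sub_pos_iff]
    intro hone
    exact hgh₀ (hinj (hone.trans ρ.map_one.symm) ▸ Commute.one_right g)
  have hlt : ‖ρ ⁅g, h₀⁆ - 1‖ < ‖ρ h₀ - 1‖ := by
    nlinarith [norm_map_commutatorElement_sub_one_le_mul hρ g h₀]
  have hcomm : Commute g ⁅g, h₀⁆ := by
    by_contra hne
    exact (hmin ⁅g, h₀⁆ ⟨hlt.trans hh₀, hne⟩).not_gt hlt
  exact hgh₀ (commute_of_commute_commutatorElement hρ hinj hh₀ hcomm)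

lemma index_le_of_forall_norm_map_sub_one_lt_mem [FiniteDimensional ℝ R]
    (hρ : ∀ g, ‖ρ g‖ ≤ 1) {H : Subgroup G} [Finite (G ⧸ H)]
    (hH : ∀ g, ‖ρ g - 1‖ < 1 / 2 → g ∈ H) : H.index ≤ 5 ^ Module.finrank ℝ R := by
  classical
  have := Fintype.ofFinite (G ⧸ H)
  let f (q : G ⧸ H) : R := (2 : ℝ) • ρ q.out
  have hnorm (x : R) : ‖(2 : ℝ) • x‖ = 2 * ‖x‖ := by rw [norm_smul, Real.norm_two]
  have hsep (p q : G ⧸ H) (hpq : p ≠ q) : 1 ≤ ‖f p - f q‖ := by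
    contrapose! hpq
    have hclose : ‖ρ (p.out⁻¹ * q.out) - 1‖ < 1 / 2 := by
      rw [← norm_map_mul_of_norm_map_le_one hρ p.out, mul_sub, ← map_mul, mul_inv_cancel_left,
        mul_one, norm_sub_rev]
      rw [← smul_sub, hnorm] at hpq
      linarith
    rw [← p.out_eq', ← q.out_eq']
    exact QuotientGroup.eq.2 (hH _ hclose)
  have hinj : Function.Injective f := fun p q hpq => by
    by_contra hne
    have := hsep p q hne
    rw [hpq, sub_self, norm_zero] at this
    linarith
  have hcard := Besicovitch.card_le_of_separated (Finset.univ.image f)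
    (by simpa [f, hnorm] using fun q : G ⧸ H => hρ q.out)
    (by simpa [Finset.forall_mem_image] using fun p q hpq => hsep p q (ne_of_apply_ne f hpq))
  rwa [Finset.card_image_of_injective _ hinj, Finset.card_univ, ← Nat.card_eq_fintype_card] at hcard

theorem exists_isMulCommutative_index_le_of_norm_map_le_one [Finite G] [FiniteDimensional ℝ R]
    (hρ : ∀ g, ‖ρ g‖ ≤ 1) (hinj : Function.Injective ρ) :
    ∃ A : Subgroup G, IsMulCommutative A ∧ A.index ≤ 5 ^ Module.finrank ℝ R := by
  have : CompleteSpace R := FiniteDimensional.complete ℝ R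
  refine ⟨Subgroup.closure {g | ‖ρ g - 1‖ < 1 / 2}, Subgroup.isMulCommutative_closure
    fun g hg h hh => commute_of_norm_map_sub_one_lt hρ hinj hg hh, ?_⟩
  exact index_le_of_forall_norm_map_sub_one_lt_mem hρ fun g hg => Subgroup.subset_closure hg

end NormedRing

lemma norm_le_one_of_mem_unitary {A : Type*} [NormedRing A] [StarRing A] [CStarRing A] {u : A}
    (hu : u ∈ unitary A) : ‖u‖ ≤ 1 := by
  nontriviality A
  exact (CStarRing.norm_of_mem_unitary hu).le

section CStarAlgebra

variable {A : Type*} [CStarAlgebra A] {G : Type*} [Group G] [Finite G]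

-- Weyl's unitary trick: `∑ g, (ρ g)⋆ * ρ g` is positive, invertible and invariant.
lemma exists_units_forall_star_map_mul_mul_map_eq (ρ : G →* Aˣ) : ∃ s : Aˣ, ∀ g,
    star (ρ g : A) * (star (s : A) * s) * ρ g = star (s : A) * s := by
  let := CStarAlgebra.spectralOrder A
  have := CStarAlgebra.spectralOrderedRing A
  have := Fintype.ofFinite G
  let M : A := ∑ g, star (ρ g : A) * ρ g
  have hM_inv (g : G) : star (ρ g : A) * M * ρ g = M := by
    simp only [M, Finset.mul_sum, Finset.sum_mul]
    refine Fintype.sum_equiv (Equiv.mulRight g) _ _ fun x => ?_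
    simp [mul_assoc]
  have hM_ge : 1 ≤ M := by
    simpa using Finset.single_le_sum (f := fun g => star (ρ g : A) * ρ g)
      (fun g _ => star_mul_self_nonneg _) (Finset.mem_univ 1)
  obtain ⟨_, ⟨s, rfl⟩, hs⟩ := CStarAlgebra.isStrictlyPositive_iff_eq_star_mul_self.1
    (isStrictlyPositive_one.of_le hM_ge)
  exact ⟨s, fun g => hs ▸ hM_inv g⟩

lemma exists_forall_conj_mem_unitary (ρ : G →* Aˣ) :
    ∃ s : Aˣ, ∀ g, ((s * ρ g * s⁻¹ : Aˣ) : A) ∈ unitary A := by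
  obtain ⟨s, hs⟩ := exists_units_forall_star_map_mul_mul_map_eq ρ
  refine ⟨s, fun g => (Units.isUnit _).mem_unitary_of_star_mul_self ?_⟩
  calc star ((s * ρ g * s⁻¹ : Aˣ) : A) * (s * ρ g * s⁻¹ : Aˣ)
      = star (↑s⁻¹ : A) * (star (ρ g : A) * (star (s : A) * s) * ρ g) * (↑s⁻¹ : A) := by
        simp only [Units.val_mul, star_mul, mul_assoc]
    _ = star (s * ↑s⁻¹ : A) * (s * ↑s⁻¹ : A) := by rw [hs, star_mul]; simp only [mul_assoc]
    _ = 1 := by simp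

theorem exists_isMulCommutative_index_le [FiniteDimensional ℂ A] {ρ : G →* Aˣ}
    (hρ : Function.Injective ρ) :
    ∃ H : Subgroup G, IsMulCommutative H ∧ H.index ≤ 5 ^ (2 * Module.finrank ℂ A) := by
  obtain ⟨s, hs⟩ := exists_forall_conj_mem_unitary ρ
  rw [← finrank_real_of_complex]
  refine exists_isMulCommutative_index_le_of_norm_map_le_one
    (ρ := (Units.coeHom A).comp ((MulAut.conj s).toMonoidHom.comp ρ))
    (fun g => norm_le_one_of_mem_unitary (hs g)) ?_
  exact Units.val_injective.comp ((MulAut.conj s).injective.comp hρ)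

end CStarAlgebra

/-- The bound that the packing argument gives in Jordan's theorem for finite subgroups of `GL_d(ℂ)`:
the `2 d²` in the exponent is the real dimension of the algebra of complex `d × d` matrices. -/
def jordanBound (d : ℕ) : ℕ :=
  5 ^ (2 * d ^ 2)

open scoped Matrix.Norms.L2Operator in
theorem exists_isMulCommutative_index_le_jordanBound {ι : Type*} [Fintype ι] [DecidableEq ι]
    {G : Type*} [Group G] [Finite G] {ρ : G →* GL ι ℂ} (hρ : Function.Injective ρ) :
    ∃ A : Subgroup G, IsMulCommutative A ∧ A.index ≤ jordanBound (Fintype.card ι) := by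
  simpa [Module.finrank_matrix, sq, jordanBound] using
    exists_isMulCommutative_index_le (A := Matrix ι ι ℂ) hρ

end Jordan

section Diagonalization

variable {K : Type*} [Field K]

section Endomorphisms

variable {V : Type*} [AddCommGroup V] [Module K V]

lemma isSemisimple_of_isOfFinOrder [CharZero K] {f : Module.End K V} (hf : IsOfFinOrder f) :
    f.IsSemisimple := by
  obtain ⟨N, hN, hfN⟩ := hf.exists_pow_eq_one
  have hsep : (Polynomial.X ^ N - Polynomial.C (1 : K)).Separable :=
    Polynomial.separable_X_pow_sub_C 1 (Nat.cast_ne_zero.2 hN.ne') one_ne_zero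
  exact Module.End.isSemisimple_of_squarefree_aeval_eq_zero hsep.squarefree (by simp [hfN])

lemma span_jointEigenvectors_eq_top [IsAlgClosed K] [FiniteDimensional K V] {κ : Type*}
    {f : κ → Module.End K V} (hcomm : Pairwise fun i j => Commute (f i) (f j))
    (hss : ∀ i, (f i).IsSemisimple) :
    Submodule.span K {v : V | ∀ i, ∃ μ : K, f i v = μ • v} = ⊤ := by
  rw [eq_top_iff, ←
    Module.End.iSup_iInf_maxGenEigenspace_eq_top_of_iSup_maxGenEigenspace_eq_top_of_commute
      f hcomm fun i => Module.End.iSup_maxGenEigenspace_eq_top (f i)]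
  refine iSup_le fun χ v hv => Submodule.subset_span fun i => ⟨χ i, ?_⟩
  have hvi := (Submodule.mem_iInf _).1 hv i
  rw [(hss i).isFinitelySemisimple.maxGenEigenspace_eq_eigenspace] at hvi
  exact Module.End.mem_eigenspace_iff.1 hvi

lemma exists_basis_forall_mem_of_span_eq_top {ι : Type*} (b : Module.Basis ι K V) {s : Set V}
    (hs : Submodule.span K s = ⊤) : ∃ b' : Module.Basis ι K V, ∀ i, b' i ∈ s := by
  let b₀ := Module.Basis.ofSpan hs.ge
  refine ⟨b₀.reindex (b₀.indexEquiv b), fun i => ?_⟩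
  rw [Module.Basis.reindex_apply]
  exact Module.Basis.ofSpan_subset hs.ge ⟨_, rfl⟩

lemma isDiag_toMatrix_of_forall_apply_eq_smul {ι : Type*} [Fintype ι] [DecidableEq ι]
    {b : Module.Basis ι K V} {f : Module.End K V} (hf : ∀ i, ∃ μ : K, f (b i) = μ • b i) :
    (LinearMap.toMatrix b b f).IsDiag := by
  intro i j hij
  obtain ⟨μ, hμ⟩ := hf j
  simp [LinearMap.toMatrix_apply, hμ, Finsupp.single_eq_of_ne hij]

end Endomorphisms

variable {ι : Type*} [Fintype ι] [DecidableEq ι]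

/-- A set of invertible matrices is simultaneously diagonalizable if a single change of basis `P`
makes all of its members diagonal. -/
def IsSimultaneouslyDiagonalizable (S : Set (GL ι K)) : Prop :=
  ∃ P : GL ι K, ∀ g ∈ S, IsDiag ((P⁻¹ * g * P : GL ι K) : Matrix ι ι K)

lemma IsSimultaneouslyDiagonalizable.mono {S T : Set (GL ι K)}
    (hT : IsSimultaneouslyDiagonalizable T) (hST : S ⊆ T) : IsSimultaneouslyDiagonalizable S :=
  hT.imp fun _ hP g hg => hP g (hST hg)

lemma isSimultaneouslyDiagonalizable_of_basis {S : Set (GL ι K)} (b : Module.Basis ι K (ι → K))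
    (hb : ∀ g ∈ S, ∀ i, ∃ μ : K, toLin' (g : Matrix ι ι K) (b i) = μ • b i) :
    IsSimultaneouslyDiagonalizable S := by
  let e := Pi.basisFun K ι
  let P : GL ι K := ⟨e.toMatrix b, b.toMatrix e, e.toMatrix_mul_toMatrix_flip b,
    b.toMatrix_mul_toMatrix_flip e⟩
  refine ⟨P, fun g hg => ?_⟩
  have hconj : ((P⁻¹ * g * P : GL ι K) : Matrix ι ι K) =
      LinearMap.toMatrix b b (toLin' (g : Matrix ι ι K)) := by
    rw [← basis_toMatrix_mul_linearMap_toMatrix_mul_basis_toMatrix b e b e,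
      ← LinearMap.toMatrix'_toLin' (g : Matrix ι ι K)]
    simp [P, e, LinearMap.toMatrix_eq_toMatrix']
  rw [hconj]
  exact isDiag_toMatrix_of_forall_apply_eq_smul (hb g hg)

theorem isSimultaneouslyDiagonalizable_of_commute [IsAlgClosed K] [CharZero K] {S : Set (GL ι K)}
    (hcomm : S.Pairwise Commute) (hfin : ∀ g ∈ S, IsOfFinOrder g) :
    IsSimultaneouslyDiagonalizable S := by
  let toEnd : GL ι K →* Module.End K (ι → K) :=
    (toLinAlgEquiv' : Matrix ι ι K ≃ₐ[K] _).toMonoidHom.comp (Units.coeHom _)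
  have hspan := span_jointEigenvectors_eq_top (f := fun g : S => toEnd g)
    (fun g h hgh => (hcomm g.2 h.2 (Subtype.coe_ne_coe.2 hgh)).map toEnd)
    (fun g => isSemisimple_of_isOfFinOrder (toEnd.isOfFinOrder (hfin g g.2)))
  obtain ⟨b, hb⟩ := exists_basis_forall_mem_of_span_eq_top (Pi.basisFun K ι) hspan
  exact isSimultaneouslyDiagonalizable_of_basis b fun g hg i => hb i ⟨g, hg⟩

lemma card_pow_eq_one_le_of_isSimultaneouslyDiagonalizable {A : Type*} [Group A] {ρ : A →* GL ι K}
    (hinj : Function.Injective ρ) (hdiag : IsSimultaneouslyDiagonalizable (Set.range ρ)) (m : ℕ)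
    [NeZero m] : Nat.card {a : A // a ^ m = 1} ≤ m ^ Fintype.card ι := by
  obtain ⟨P, hP⟩ := hdiag
  let σ : A →* GL ι K := (MulAut.conj P⁻¹).toMonoidHom.comp ρ
  have hσ_inj : Function.Injective σ := (MulAut.conj P⁻¹).injective.comp hinj
  have hσ_diag (a : A) : diagonal (diag (σ a : Matrix ι ι K)) = σ a := by
    simpa [σ] using (hP (ρ a) ⟨a, rfl⟩).diagonal_diag
  have hroot (a : {a : A // a ^ m = 1}) (i : ι) : diag (σ a : Matrix ι ι K) i ^ m = 1 := by
    have hpow : (σ a : Matrix ι ι K) ^ m = 1 := by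
      rw [← Units.val_pow_eq_pow_val, ← map_pow, a.2, map_one, Units.val_one]
    rw [← hσ_diag, diagonal_pow, ← diagonal_one] at hpow
    exact congrFun (diagonal_injective hpow) i
  let w (a : {a : A // a ^ m = 1}) (i : ι) : rootsOfUnity m K :=
    rootsOfUnity.mkOfPowEq _ (hroot a i)
  have hw_inj : Function.Injective w := fun a a' haa' => by
    have hdiag_eq : diag (σ a : Matrix ι ι K) = diag (σ a' : Matrix ι ι K) :=
      funext fun i => by simpa [w] using congrArg (fun z => ((z i : Kˣ) : K)) haa'
    exact Subtype.ext (hσ_inj (Units.ext (by rw [← hσ_diag, hdiag_eq, hσ_diag])))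
  calc Nat.card {a : A // a ^ m = 1} ≤ Nat.card (ι → rootsOfUnity m K) :=
        Nat.card_le_card_of_injective w hw_inj
    _ = Nat.card (rootsOfUnity m K) ^ Fintype.card ι := by
        rw [Nat.card_fun, Nat.card_eq_fintype_card (α := ι)]
    _ ≤ m ^ Fintype.card ι := Nat.pow_le_pow_left (card_rootsOfUnity K m) _

end Diagonalization

section FiniteLinearGroups

variable {ι : Type*} [Fintype ι] [DecidableEq ι] {G : Type*} [Group G] [Finite G] {ρ : G →* GL ι ℂ}

lemma isSimultaneouslyDiagonalizable_map_of_isMulCommutative (ρ : G →* GL ι ℂ) (A : Subgroup G)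
    [IsMulCommutative A] : IsSimultaneouslyDiagonalizable (A.map ρ : Set (GL ι ℂ)) := by
  refine isSimultaneouslyDiagonalizable_of_commute ?_ ?_
  · exact fun g hg h hh _ => setLike_mul_comm hg hh
  · rintro _ ⟨a, -, rfl⟩
    exact ρ.isOfFinOrder (isOfFinOrder_of_finite a)

theorem isSimultaneouslyDiagonalizable_map_powSubgroup (hρ : Function.Injective ρ) :
    IsSimultaneouslyDiagonalizable
      ((powSubgroup G (jordanBound (Fintype.card ι)).factorial).map ρ : Set (GL ι ℂ)) := by
  obtain ⟨A, _, hA⟩ := exists_isMulCommutative_index_le_jordanBound hρ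
  exact (isSimultaneouslyDiagonalizable_map_of_isMulCommutative ρ A).mono
    (Subgroup.map_mono (powSubgroup_factorial_le A.index_ne_zero_of_finite hA))

theorem index_powSubgroup_le_jordanBound (hρ : Function.Injective ρ) (m : ℕ) [NeZero m] :
    (powSubgroup G m).index ≤ m ^ Fintype.card ι * jordanBound (Fintype.card ι) := by
  obtain ⟨A, _, hA⟩ := exists_isMulCommutative_index_le_jordanBound hρ
  have hdiag : IsSimultaneouslyDiagonalizable (Set.range (ρ.comp A.subtype)) := by
    have := isSimultaneouslyDiagonalizable_map_of_isMulCommutative ρ A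
    rwa [← A.range_subtype, ← MonoidHom.range_comp, MonoidHom.coe_range] at this
  calc (powSubgroup G m).index ≤ Nat.card {a : A // a ^ m = 1} * A.index :=
        index_powSubgroup_le A m
    _ ≤ m ^ Fintype.card ι * jordanBound (Fintype.card ι) :=
        Nat.mul_le_mul (card_pow_eq_one_le_of_isSimultaneouslyDiagonalizable
          (ρ := ρ.comp A.subtype) (hρ.comp A.subtype_injective) hdiag m) hA

end FiniteLinearGroups

section ProjectiveLift

lemma isDiagonalizableSubgroup_map_mk' {n : ℕ} {H : Subgroup (GL (Fin n) ℂ)}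
    (hH : IsSimultaneouslyDiagonalizable (H : Set (GL (Fin n) ℂ))) :
    IsDiagonalizableSubgroup (H.map (QuotientGroup.mk' (Subgroup.center (GL (Fin n) ℂ)))) := by
  obtain ⟨P, hP⟩ := hH
  refine ⟨P, ?_⟩
  rintro g ⟨h, hh, hhg⟩
  obtain ⟨c, rfl⟩ := ProjGenLinGroup.mk_eq_mk_iff.1 hhg
  have hscalar : ((P⁻¹ * (h * GeneralLinearGroup.scalar (Fin n) c) * P : GL (Fin n) ℂ) :
      Matrix (Fin n) (Fin n) ℂ) = (c : ℂ) • ((P⁻¹ * h * P : GL (Fin n) ℂ) : Matrix _ _ ℂ) := by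
    simp [Matrix.mul_assoc, ← smul_one_eq_diagonal]
  rw [hscalar]
  exact (hP h hh).smul (c : ℂ)

/-- The projection of `SL n K` to `PGL n K`, through which finite projective groups are lifted to
finite linear groups. -/
def specialLinearToPGL (n : ℕ) (K : Type*) [Field K] : SpecialLinearGroup (Fin n) K →* PGL n K :=
  (QuotientGroup.mk' (Subgroup.center (GL (Fin n) K))).comp SpecialLinearGroup.toGL

variable {n : ℕ} {K : Type*} [Field K]

instance finite_ker_specialLinearToPGL : Finite (specialLinearToPGL n K).ker := by
  have hker : (specialLinearToPGL n K).ker = Subgroup.center (SpecialLinearGroup (Fin n) K) :=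
    SpecialLinearGroup.toPGL_ker
  have : NeZero (max (Fintype.card (Fin n)) 1) := ⟨(lt_max_of_lt_right one_pos).ne'⟩
  rw [hker]
  exact Finite.of_equiv _ SpecialLinearGroup.center_equiv_rootsOfUnity.symm.toEquiv

lemma specialLinearToPGL_surjective [NeZero n] [IsAlgClosed K] :
    Function.Surjective (specialLinearToPGL n K) := by
  intro x
  let e := ProjectiveSpecialLinearGroup.isoPSLOfAlgClosedOfNonempty (n := Fin n) (F := K)
  obtain ⟨y, hy⟩ := e.symm.surjective x
  obtain ⟨g, rfl⟩ := QuotientGroup.mk_surjective y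
  exact ⟨g, hy⟩

lemma finite_comap_of_finite_ker {G H : Type*} [Group G] [Group H] (f : G →* H) [Finite f.ker]
    (L : Subgroup H) [Finite L] : Finite (L.comap f) := by
  refine Set.Finite.preimage' (s := (L : Set H)) (Set.toFinite _) fun x _ => ?_
  obtain hempty | ⟨g, rfl⟩ := (f ⁻¹' {x}).eq_empty_or_nonempty
  · exact hempty ▸ Set.finite_empty
  · refine ((f.ker : Set G).toFinite.image (g * ·)).subset fun g' hg' => ⟨g⁻¹ * g', ?_, by simp⟩
    exact f.eq_iff.1 hg'

theorem exists_finite_map_mk'_eq [NeZero n] [IsAlgClosed K] (G : Subgroup (PGL n K)) [Finite G] :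
    ∃ L : Subgroup (GL (Fin n) K),
      Finite L ∧ L.map (QuotientGroup.mk' (Subgroup.center (GL (Fin n) K))) = G := by
  have : Finite (G.comap (specialLinearToPGL n K)) := finite_comap_of_finite_ker _ G
  refine ⟨(G.comap (specialLinearToPGL n K)).map SpecialLinearGroup.toGL,
    Finite.Set.finite_image _ _, ?_⟩
  rw [Subgroup.map_map]
  exact Subgroup.map_comap_eq_self_of_surjective specialLinearToPGL_surjective G

end ProjectiveLift

/-- for every `n > 0` there is a constant `c` such that every
finite subgroup `G` of `PGL n ℂ` has a characteristic, diagonalizable subgroup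
of index at most `c`. -/
theorem exists_characteristic_diagonalizable_subgroup (n : ℕ) (hn : 0 < n) :
    ∃ c : ℕ, ∀ (G : Subgroup (PGL n ℂ)), Finite G →
      ∃ C : Subgroup G, C.Characteristic ∧ C.index ≤ c ∧
        IsDiagonalizableSubgroup (C.map G.subtype) := by
  let m := (jordanBound n).factorial
  have : NeZero m := ⟨Nat.factorial_ne_zero _⟩
  have : NeZero n := ⟨hn.ne'⟩
  refine ⟨m ^ n * jordanBound n, fun G _ => ⟨powSubgroup G m, inferInstance, ?_⟩⟩
  obtain ⟨L, _, rfl⟩ := exists_finite_map_mk'_eq G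
  let φ := (QuotientGroup.mk' (Subgroup.center (GL (Fin n) ℂ))).subgroupMap L
  have hφ : Function.Surjective φ := MonoidHom.subgroupMap_surjective _ L
  rw [← map_powSubgroup_of_surjective hφ]
  constructor
  · calc ((powSubgroup L m).map φ).index ≤ (powSubgroup L m).index :=
          Nat.le_of_dvd (Nat.pos_of_ne_zero Subgroup.index_ne_zero_of_finite)
            (Subgroup.index_map_dvd _ hφ)
      _ ≤ m ^ n * jordanBound n := by
          simpa using index_powSubgroup_le_jordanBound L.subtype_injective m
  · have hdiag := isDiagonalizableSubgroup_map_mk'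
      (isSimultaneouslyDiagonalizable_map_powSubgroup L.subtype_injective)
    rw [Subgroup.map_map, Fintype.card_fin] at hdiag
    rw [Subgroup.map_map]
    exact hdiag
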